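/- Let Ω ⊆ ℂ^{m1×m2} be a nonempty cone (i.e., M ∈ Ω and σ > 0 real imply σM ∈ Ω), let Ω_B = Ω ∩ {M : ‖M‖_F ≤ 1}, and let n be a positive integer with n > upper Minkowski dimension of Ω_B. Then for Lebesgue-almost all tuples a_1, …, a_n ∈ ℂ^{m1} and b_1, …, b_n ∈ ℂ^{m2}, the following holds: for all M1, M2 ∈ Ω, if a_j* M1 (conj b_j) = a_j* M2 (conj b_j) for all j = 1, …, n, then M1 = M2. (Strong identifiability of cone-constrained matrix recovery from rank-one measurements.) -/

import Mathlib

/-!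
The cone hypothesis allows both matrices to be rescaled into the unit ball by a common factor, so
only pairs of points of `T = Ω ∩ closedBall 0 1` matter, and by countable unions only pairs at
distance at least `c > 0` and tuples `(a, b)` with entries of modulus at most `R`.

For a fixed matrix `D` with an entry bounded below, the measurement is small with small probability:
for every `s < 2` one has `|{(a, b) : |a* D conj b| ≤ δ}| ≤ C δ ^ s`. By Markov's inequality this
follows from a uniform bound on the integral of `|a* D conj b| ^ (-s)`, which in turn comes from
applying twice (in `a`, then in `b`) the bound for linear forms `exists_lintegral_linear_le`; the
latter rests on the local integrability of `|z| ^ (-s)` on the real two-dimensional space `ℂ`.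
Hence all `n` independent measurements of `D` are at most `δ` on a set of measure `O(δ ^ (s n))`.

If `T` has upper Minkowski dimension less than `d < n`, it is covered by at most `ρ ^ (-d)` balls of
radius `ρ`. If two points of `T` at distance at least `c` have equal measurements, then the
difference `D` of the centres of their balls has norm at least `c / 2` and measurements `O(ρ)`. The
union bound over pairs of centres gives measure `O(ρ ^ (s n - 2 d))`, which tends to zero for a
suitable `s < 2` (`tupleMeasure_separated_eq_zero`).

Since the dimension is a real-valued `limsup`, the argument also needs the quotient of logarithms to
be bounded above near `0` (`isBoundedUnder_covering_ratio`).
-/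

open MeasureTheory Filter

/-- Covering number: the minimal number of closed balls of radius `ρ`
(with arbitrary centers) needed to cover `Ω`. -/
noncomputable def coveringNumber {X : Type*} [PseudoMetricSpace X] (Ω : Set X) (ρ : ℝ) : ℕ :=
  sInf {k : ℕ | ∃ C : Finset X, C.card = k ∧ Ω ⊆ ⋃ c ∈ C, Metric.closedBall c ρ}

/-- Upper Minkowski dimension: `limsup_{ρ → 0⁺} log N_Ω(ρ) / log (1/ρ)`. -/
noncomputable def upperMinkowskiDim {X : Type*} [PseudoMetricSpace X] (Ω : Set X) : ℝ :=
  Filter.limsup (fun ρ : ℝ => Real.log (coveringNumber Ω ρ) / Real.log (1 / ρ))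
    (nhdsWithin 0 (Set.Ioi 0))

/-- The rank-one measurement `a* M (conj b) = ∑_{i,j} conj(a_i) M_{ij} conj(b_j)`. -/
noncomputable def rankOneMeas {m1 m2 : ℕ} (a : Fin m1 → ℂ) (b : Fin m2 → ℂ)
    (M : EuclideanSpace ℂ (Fin m1 × Fin m2)) : ℂ :=
  ∑ i : Fin m1, ∑ j : Fin m2, (starRingEnd ℂ) (a i) * M (i, j) * (starRingEnd ℂ) (b j)

/-! ### Covering numbers in the unit ball -/

lemma coveringNumber_le_card {X : Type*} [PseudoMetricSpace X] {Ω : Set X} {ρ : ℝ} (C : Finset X)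
    (h : Ω ⊆ ⋃ c ∈ C, Metric.closedBall c ρ) : coveringNumber Ω ρ ≤ C.card :=
  Nat.sInf_le ⟨C, rfl, h⟩

/-- By compactness `K` balls of radius `1/2` cover the unit ball; rescaling and iterating, `K ^ k`
balls of radius `2⁻ᵏ` cover it. -/
lemma exists_dyadic_cover (E : Type*) [NormedAddCommGroup E] [NormedSpace ℝ E] [ProperSpace E] :
    ∃ K : ℕ, 1 ≤ K ∧ ∀ k : ℕ, ∃ C : Finset E, C.card ≤ K ^ k ∧
      Metric.closedBall (0 : E) 1 ⊆ ⋃ c ∈ C, Metric.closedBall c ((1 / 2 : ℝ) ^ k) := by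
  classical
  obtain ⟨T, -, hTf, hT⟩ := (isCompact_closedBall (0 : E) 1).finite_cover_balls
    (e := 1 / 2) (by norm_num)
  lift T to Finset E using hTf
  refine ⟨T.card + 1, by omega, fun k => ?_⟩
  induction k with
  | zero => exact ⟨{0}, by simp, by simp⟩
  | succ k ih =>
    obtain ⟨C, hC, hcov⟩ := ih
    refine ⟨Finset.image₂ (fun c t => c + (1 / 2 : ℝ) ^ k • t) C T, ?_, ?_⟩
    · calc _ ≤ C.card * T.card := Finset.card_image₂_le _ _ _
        _ ≤ (T.card + 1) ^ k * (T.card + 1) := by gcongr; omega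
        _ = _ := (pow_succ _ _).symm
    · intro x hx
      have h1 := hcov hx
      simp only [Set.mem_iUnion, exists_prop] at h1
      obtain ⟨c, hc, hxc⟩ := h1
      have h2 : (2 : ℝ) ^ k • (x - c) ∈ Metric.closedBall (0 : E) 1 := by
        rw [mem_closedBall_zero_iff, norm_smul, ← dist_eq_norm]
        have := Metric.mem_closedBall.1 hxc
        rw [norm_pow, Real.norm_ofNat]
        calc (2 : ℝ) ^ k * dist x c ≤ 2 ^ k * (1 / 2) ^ k := by gcongr
          _ = 1 := by rw [← mul_pow]; norm_num
      have h3 := hT h2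
      simp only [Set.mem_iUnion, exists_prop, Finset.mem_coe] at h3
      obtain ⟨t, ht, hxt⟩ := h3
      simp only [Set.mem_iUnion, exists_prop]
      refine ⟨_, Finset.mem_image₂_of_mem hc ht, ?_⟩
      rw [mem_ball_iff_norm] at hxt
      rw [mem_closedBall_iff_norm]
      have e : x - (c + (1 / 2 : ℝ) ^ k • t) = (1 / 2 : ℝ) ^ k • ((2 : ℝ) ^ k • (x - c) - t) := by
        rw [smul_sub, smul_smul, ← mul_pow]
        norm_num
        abel
      rw [e, norm_smul, norm_pow, pow_succ]
      have : ‖(1 / 2 : ℝ)‖ = 1 / 2 := by norm_num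
      rw [this]
      gcongr

lemma exists_cover_of_subset_unitBall {E : Type*} [NormedAddCommGroup E] [NormedSpace ℝ E]
    [ProperSpace E] {T : Set E} (hT : T ⊆ Metric.closedBall 0 1) {ρ : ℝ} (hρ : 0 < ρ) :
    ∃ C : Finset E, C.card = coveringNumber T ρ ∧ T ⊆ ⋃ c ∈ C, Metric.closedBall c ρ := by
  obtain ⟨K, -, h⟩ := exists_dyadic_cover E
  obtain ⟨k, hk⟩ := exists_pow_lt_of_lt_one hρ (by norm_num : (1 / 2 : ℝ) < 1)
  obtain ⟨C, -, hC⟩ := h k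
  exact Nat.sInf_mem (s := {k : ℕ | ∃ C : Finset E, C.card = k ∧
    T ⊆ ⋃ c ∈ C, Metric.closedBall c ρ}) ⟨C.card, C, rfl, (hT.trans hC).trans
      (Set.iUnion₂_mono fun c _ => Metric.closedBall_subset_closedBall hk.le)⟩

/-- The quotient defining the upper Minkowski dimension is bounded near `0`, so that its real-valued
`limsup` is a genuine one. -/
lemma isBoundedUnder_covering_ratio {E : Type*} [NormedAddCommGroup E] [NormedSpace ℝ E]
    [ProperSpace E] {T : Set E} (hT : T ⊆ Metric.closedBall 0 1) :
    IsBoundedUnder (· ≤ ·) (nhdsWithin 0 (Set.Ioi 0))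
      (fun ρ : ℝ => Real.log (coveringNumber T ρ) / Real.log (1 / ρ)) := by
  obtain ⟨K, hK1, h⟩ := exists_dyadic_cover E
  refine ⟨2 * Real.log K / Real.log 2, ?_⟩
  rw [eventually_map]
  filter_upwards [Ioo_mem_nhdsGT (by norm_num : (0 : ℝ) < 1 / 2)] with ρ ⟨hρ0, hρ⟩
  obtain ⟨k, hk1, hk2⟩ := exists_nat_pow_near_of_lt_one hρ0 (by linarith)
    (by norm_num : (0 : ℝ) < 1 / 2) (by norm_num)
  obtain ⟨C, hCc, hC⟩ := h (k + 1)
  have hN : coveringNumber T ρ ≤ K ^ (k + 1) :=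
    (coveringNumber_le_card C ((hT.trans hC).trans
      (Set.iUnion₂_mono fun c _ => Metric.closedBall_subset_closedBall hk1.le))).trans hCc
  have hk : 1 ≤ k := by
    by_contra hk
    obtain rfl : k = 0 := by omega
    norm_num at hk1
    linarith
  have hk' : (1 : ℝ) ≤ k := by exact_mod_cast hk
  have hKlog : 0 ≤ Real.log K := Real.log_natCast_nonneg K
  have hl2 : 0 < Real.log 2 := Real.log_pos (by norm_num)
  have h1 : Real.log (coveringNumber T ρ) ≤ (k + 1) * Real.log K := by
    rcases Nat.eq_zero_or_pos (coveringNumber T ρ) with h0 | h0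
    · rw [h0]; simp; positivity
    · have := Real.log_le_log (by exact_mod_cast h0)
        (by exact_mod_cast hN : (coveringNumber T ρ : ℝ) ≤ (K : ℝ) ^ (k + 1))
      rw [Real.log_pow] at this
      exact_mod_cast this
  have h2 : k * Real.log 2 ≤ Real.log (1 / ρ) := by
    rw [← Real.log_pow]
    apply Real.log_le_log (by positivity)
    rw [le_div_iff₀ hρ0]
    calc (2 : ℝ) ^ k * ρ ≤ 2 ^ k * (1 / 2) ^ k := by gcongr
      _ = 1 := by rw [← mul_pow]; norm_num
  have h3 : 0 < Real.log (1 / ρ) := lt_of_lt_of_le (by positivity) h2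
  rw [div_le_div_iff₀ h3 hl2]
  nlinarith [mul_le_mul_of_nonneg_right h1 hl2.le, mul_le_mul_of_nonneg_left h2 hKlog,
    mul_nonneg (mul_nonneg hKlog hl2.le) (sub_nonneg.2 hk')]

/-! ### Negative moments of linear forms -/

open scoped ENNReal

/-- Lebesgue measure on the disc of radius `R`. -/
noncomputable def discMeasure (R : ℝ) : Measure ℂ := volume.restrict (Metric.closedBall 0 R)

instance (R : ℝ) : IsFiniteMeasure (discMeasure R) := by
  unfold discMeasure
  exact isFiniteMeasure_restrict.2 measure_closedBall_lt_top.ne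

/-- The singularity `‖z‖⁻ˢ` is locally integrable on `ℂ`, which has real dimension `2 > s`. -/
lemma lintegral_unitBall_enorm_rpow_lt_top {s : ℝ} (hs2 : s < 2) :
    ∫⁻ z in Metric.ball (0 : ℂ) 1, ‖z‖ₑ ^ (-s) < ∞ := by
  have h : IntegrableOn (fun z : ℂ => ‖z‖ ^ (-s)) (Metric.ball 0 1) := by
    refine (integrableOn_fun_norm_addHaar (E := ℂ) (f := fun y : ℝ => y ^ (-s))
      (μ := volume)).2 ?_
    rw [Complex.finrank_real_complex]
    refine ((intervalIntegral.integrableOn_Ioo_rpow_iff (s := 1 - s) one_pos).2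
      (by linarith)).congr_fun (fun y hy => ?_) measurableSet_Ioo
    have := Real.rpow_add hy.1 1 (-s)
    simpa [sub_eq_add_neg] using this
  refine lt_of_eq_of_lt (lintegral_congr_ae ?_) h.2
  have h0 : ∀ᵐ z : ℂ ∂volume.restrict (Metric.ball 0 1), z ≠ 0 :=
    ae_restrict_of_ae (by simp [ae_iff])
  filter_upwards [h0] with z hz
  rw [Real.enorm_of_nonneg (by positivity), ← ENNReal.ofReal_rpow_of_pos (norm_pos_iff.2 hz),
    ofReal_norm]

/-- A bound uniform over all translates of the singularity: the part near the pole is controlled by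
local integrability, the rest by the area of the disc. -/
lemma exists_lintegral_translate_le {s : ℝ} (hs0 : 0 < s) (hs2 : s < 2) (R : ℝ) :
    ∃ J : ℝ≥0∞, J ≠ 0 ∧ J ≠ ∞ ∧ ∀ w : ℂ, ∫⁻ z, ‖z + w‖ₑ ^ (-s) ∂discMeasure R ≤ J := by
  set g : ℂ → ℝ≥0∞ := (Metric.ball (0 : ℂ) 1).indicator (fun z => ‖z‖ₑ ^ (-s)) with hg
  have hgm : Measurable g := by
    apply Measurable.indicator _ measurableSet_ball
    fun_prop
  refine ⟨(∫⁻ z, g z) + (discMeasure R Set.univ + 1), by simp, ?_, fun w => ?_⟩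
  · rw [hg, lintegral_indicator measurableSet_ball]
    have := (lintegral_unitBall_enorm_rpow_lt_top hs2).ne
    simp [this]
  · calc ∫⁻ z, ‖z + w‖ₑ ^ (-s) ∂discMeasure R ≤ ∫⁻ z, (g (z + w) + 1) ∂discMeasure R := by
          refine lintegral_mono fun z => ?_
          by_cases h : z + w ∈ Metric.ball (0 : ℂ) 1
          · simp only [hg, Set.indicator_of_mem h]
            exact le_self_add
          · refine le_add_left ?_
            rw [ENNReal.rpow_neg, ENNReal.inv_le_one]
            apply ENNReal.one_le_rpow _ hs0
            rw [mem_ball_zero_iff, not_lt] at h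
            rw [← ofReal_norm]
            simpa using ENNReal.ofReal_le_ofReal h
      _ = (∫⁻ z, g (z + w) ∂discMeasure R) + discMeasure R Set.univ := by
          rw [lintegral_add_right _ measurable_const]; simp
      _ ≤ (∫⁻ z, g (z + w)) + (discMeasure R Set.univ + 1) := by
          gcongr
          · exact Measure.restrict_le_self
          · exact le_self_add
      _ = _ := by rw [lintegral_add_right_eq_self]

/-- For `k = 0` the right-hand side is infinite, as `0 ^ (-s) = ∞`. -/
lemma exists_lintegral_affine_le {s : ℝ} (hs0 : 0 < s) (hs2 : s < 2) (R : ℝ) :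
    ∃ J : ℝ≥0∞, J ≠ ∞ ∧ ∀ k l : ℂ,
      ∫⁻ z, ‖z * k + l‖ₑ ^ (-s) ∂discMeasure R ≤ J * ‖k‖ₑ ^ (-s) := by
  obtain ⟨J, hJ0, hJ, h⟩ := exists_lintegral_translate_le hs0 hs2 R
  refine ⟨J, hJ, fun k l => ?_⟩
  rcases eq_or_ne k 0 with rfl | hk
  · simp [ENNReal.zero_rpow_of_neg (neg_neg_of_pos hs0), ENNReal.mul_top hJ0]
  · have e : ∀ z : ℂ, ‖z * k + l‖ₑ ^ (-s) = ‖z + l / k‖ₑ ^ (-s) * ‖k‖ₑ ^ (-s) := fun z => by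
      rw [← ENNReal.mul_rpow_of_ne_top enorm_ne_top enorm_ne_top, ← enorm_mul]
      congr 2
      field_simp
    simp_rw [e]
    rw [lintegral_mul_const _ (by fun_prop)]
    gcongr
    exact h _

/-- Integrating out the coordinate `x i` first, all other terms of the linear form only translate the
singularity. -/
lemma exists_lintegral_linear_le {s : ℝ} (hs0 : 0 < s) (hs2 : s < 2) (R : ℝ) (m : ℕ) :
    ∃ C : ℝ≥0∞, C ≠ ∞ ∧ ∀ (ℓ : Fin m → ℂ) (i : Fin m),
      ∫⁻ x, ‖∑ k, x k * ℓ k‖ₑ ^ (-s) ∂Measure.pi (fun _ : Fin m => discMeasure R)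
        ≤ C * ‖ℓ i‖ₑ ^ (-s) := by
  obtain ⟨J, hJ, h⟩ := exists_lintegral_affine_le hs0 hs2 R
  cases m with
  | zero => exact ⟨0, by simp, fun _ i => i.elim0⟩
  | succ m =>
    refine ⟨J * Measure.pi (fun _ : Fin m => discMeasure R) Set.univ,
      ENNReal.mul_ne_top hJ (measure_ne_top _ _), fun ℓ i => ?_⟩
    have hp := measurePreserving_piFinSuccAbove (fun _ : Fin (m + 1) => discMeasure R) i
    have hF : Measurable (fun y : ℂ × (Fin m → ℂ) =>
        ‖y.1 * ℓ i + ∑ k, y.2 k * ℓ (i.succAbove k)‖ₑ ^ (-s)) := by fun_prop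
    calc _ = ∫⁻ y : ℂ × (Fin m → ℂ), ‖y.1 * ℓ i + ∑ k, y.2 k * ℓ (i.succAbove k)‖ₑ ^ (-s)
          ∂(discMeasure R).prod (Measure.pi fun _ => discMeasure R) := by
          rw [← hp.lintegral_comp hF]
          refine lintegral_congr fun x => ?_
          rw [Fin.sum_univ_succAbove _ i]
          rfl
      _ = ∫⁻ y : Fin m → ℂ, ∫⁻ z : ℂ, ‖z * ℓ i + ∑ k, y k * ℓ (i.succAbove k)‖ₑ ^ (-s)
          ∂discMeasure R ∂Measure.pi fun _ => discMeasure R :=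
          lintegral_prod_symm _ hF.aemeasurable
      _ ≤ ∫⁻ _ : Fin m → ℂ, J * ‖ℓ i‖ₑ ^ (-s) ∂Measure.pi fun _ => discMeasure R :=
          lintegral_mono fun y => h (ℓ i) _
      _ = _ := by rw [lintegral_const]; ring

/-! ### Small ball estimates for rank-one measurements -/

/-- Product over `Fin m` of Lebesgue measure on the disc of radius `R`. -/
noncomputable abbrev polydiscMeasure (R : ℝ) (m : ℕ) : Measure (Fin m → ℂ) :=
  Measure.pi fun _ => discMeasure R

/-- Lebesgue measure on the tuples `(a, b)` all of whose entries have modulus at most `R`. -/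
noncomputable abbrev tupleMeasure (R : ℝ) (m1 m2 n : ℕ) :
    Measure ((Fin n → Fin m1 → ℂ) × (Fin n → Fin m2 → ℂ)) :=
  (Measure.pi fun _ => polydiscMeasure R m1).prod (Measure.pi fun _ => polydiscMeasure R m2)

lemma enorm_rankOneMeas {m1 m2 : ℕ} (a : Fin m1 → ℂ) (b : Fin m2 → ℂ)
    (D : EuclideanSpace ℂ (Fin m1 × Fin m2)) :
    ‖rankOneMeas a b D‖ₑ = ‖∑ i, a i * ∑ j, b j * (starRingEnd ℂ) (D (i, j))‖ₑ := by
  have : ∑ i, a i * ∑ j, b j * (starRingEnd ℂ) (D (i, j)) =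
      (starRingEnd ℂ) (rankOneMeas a b D) := by
    simp only [rankOneMeas, map_sum, map_mul, Complex.conj_conj, Finset.mul_sum]
    exact Finset.sum_congr rfl fun i _ => Finset.sum_congr rfl fun j _ => by ring
  rw [this, ← ofReal_norm, ← ofReal_norm, RCLike.norm_conj]

lemma measurable_enorm_rankOneMeas {m1 m2 : ℕ} (D : EuclideanSpace ℂ (Fin m1 × Fin m2)) :
    Measurable fun p : (Fin m1 → ℂ) × (Fin m2 → ℂ) => ‖rankOneMeas p.1 p.2 D‖ₑ := by
  simp_rw [enorm_rankOneMeas]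
  fun_prop

/-- The bilinear form is linear in `a` with coefficients linear in `b`, so the bound for linear forms
applies twice. -/
lemma exists_lintegral_rankOne_le {s : ℝ} (hs0 : 0 < s) (hs2 : s < 2) (R : ℝ) (m1 m2 : ℕ) :
    ∃ C : ℝ≥0∞, C ≠ ∞ ∧ ∀ (D : EuclideanSpace ℂ (Fin m1 × Fin m2)) (i : Fin m1) (j : Fin m2),
      ∫⁻ p, ‖rankOneMeas p.1 p.2 D‖ₑ ^ (-s) ∂(polydiscMeasure R m1).prod (polydiscMeasure R m2)
        ≤ C * ‖D (i, j)‖ₑ ^ (-s) := by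
  obtain ⟨C1, hC1, h1⟩ := exists_lintegral_linear_le hs0 hs2 R m1
  obtain ⟨C2, hC2, h2⟩ := exists_lintegral_linear_le hs0 hs2 R m2
  refine ⟨C1 * C2, ENNReal.mul_ne_top hC1 hC2, fun D i j => ?_⟩
  have hb : ∀ b : Fin m2 → ℂ,
      ∫⁻ a, ‖rankOneMeas a b D‖ₑ ^ (-s) ∂polydiscMeasure R m1 ≤
        C1 * ‖∑ j, b j * (starRingEnd ℂ) (D (i, j))‖ₑ ^ (-s) := fun b => by
    simp_rw [enorm_rankOneMeas]
    exact h1 (fun i => ∑ j, b j * (starRingEnd ℂ) (D (i, j))) i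
  have hD : ‖(starRingEnd ℂ) (D (i, j))‖ₑ = ‖D (i, j)‖ₑ := by
    rw [← ofReal_norm, ← ofReal_norm, RCLike.norm_conj]
  calc _ = ∫⁻ b, ∫⁻ a, ‖rankOneMeas a b D‖ₑ ^ (-s) ∂polydiscMeasure R m1 ∂polydiscMeasure R m2 :=
        lintegral_prod_symm _ ((measurable_enorm_rankOneMeas D).pow_const _).aemeasurable
    _ ≤ ∫⁻ b, C1 * ‖∑ j, b j * (starRingEnd ℂ) (D (i, j))‖ₑ ^ (-s) ∂polydiscMeasure R m2 :=
        lintegral_mono hb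
    _ = C1 * ∫⁻ b, ‖∑ j, b j * (starRingEnd ℂ) (D (i, j))‖ₑ ^ (-s) ∂polydiscMeasure R m2 :=
        lintegral_const_mul' _ _ hC1
    _ ≤ C1 * (C2 * ‖(starRingEnd ℂ) (D (i, j))‖ₑ ^ (-s)) :=
        mul_le_mul' le_rfl (h2 (fun j => (starRingEnd ℂ) (D (i, j))) j)
    _ = _ := by rw [hD, mul_assoc]

/-- Small ball estimate for a single rank-one measurement, by Markov's inequality. -/
lemma exists_measure_rankOne_small_le {s : ℝ} (hs0 : 0 < s) (hs2 : s < 2) (R : ℝ) (m1 m2 : ℕ) :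
    ∃ C : ℝ≥0∞, C ≠ ∞ ∧ ∀ (D : EuclideanSpace ℂ (Fin m1 × Fin m2)) (i : Fin m1) (j : Fin m2)
      (δ : ℝ≥0∞), δ ≠ 0 → δ ≠ ∞ →
      (polydiscMeasure R m1).prod (polydiscMeasure R m2) {p | ‖rankOneMeas p.1 p.2 D‖ₑ ≤ δ}
        ≤ C * (δ ^ s * ‖D (i, j)‖ₑ ^ (-s)) := by
  obtain ⟨C, hC, h⟩ := exists_lintegral_rankOne_le hs0 hs2 R m1 m2
  refine ⟨C, hC, fun D i j δ hδ0 hδ => ?_⟩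
  have hM := mul_meas_ge_le_lintegral
    (μ := (polydiscMeasure R m1).prod (polydiscMeasure R m2))
    ((measurable_enorm_rankOneMeas D).pow_const (-s)) (δ ^ (-s))
  have hsub : {p : (Fin m1 → ℂ) × (Fin m2 → ℂ) | ‖rankOneMeas p.1 p.2 D‖ₑ ≤ δ} ⊆
      {p | δ ^ (-s) ≤ ‖rankOneMeas p.1 p.2 D‖ₑ ^ (-s)} := fun p hp => by
    simp only [Set.mem_ofPred_eq, ENNReal.rpow_neg] at hp ⊢
    exact ENNReal.inv_le_inv.2 (ENNReal.rpow_le_rpow hp hs0.le)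
  have hδs : δ ^ s * δ ^ (-s) = 1 := by
    rw [← ENNReal.rpow_add _ _ hδ0 hδ]; simp
  set P := (polydiscMeasure R m1).prod (polydiscMeasure R m2)
  calc P _ ≤ P {p | δ ^ (-s) ≤ ‖rankOneMeas p.1 p.2 D‖ₑ ^ (-s)} := measure_mono hsub
    _ = δ ^ s * (δ ^ (-s) * P {p | δ ^ (-s) ≤ ‖rankOneMeas p.1 p.2 D‖ₑ ^ (-s)}) := by
        rw [← mul_assoc, hδs, one_mul]
    _ ≤ δ ^ s * (C * ‖D (i, j)‖ₑ ^ (-s)) := by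
        exact mul_le_mul' le_rfl (hM.trans (h D i j))
    _ = _ := by ring

/-- The `n` measurements are independent. -/
lemma tupleMeasure_small (R : ℝ) {m1 m2 : ℕ} (n : ℕ) (D : EuclideanSpace ℂ (Fin m1 × Fin m2))
    (δ : ℝ≥0∞) :
    tupleMeasure R m1 m2 n {ab | ∀ j, ‖rankOneMeas (ab.1 j) (ab.2 j) D‖ₑ ≤ δ} =
      ((polydiscMeasure R m1).prod (polydiscMeasure R m2)
        {p | ‖rankOneMeas p.1 p.2 D‖ₑ ≤ δ}) ^ n := by
  have hp := measurePreserving_arrowProdEquivProdArrow (Fin m1 → ℂ) (Fin m2 → ℂ) (Fin n)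
    (fun _ => polydiscMeasure R m1) (fun _ => polydiscMeasure R m2)
  have hm : MeasurableSet {ab : (Fin n → Fin m1 → ℂ) × (Fin n → Fin m2 → ℂ) |
      ∀ j, ‖rankOneMeas (ab.1 j) (ab.2 j) D‖ₑ ≤ δ} := by
    rw [Set.ofPred_forall]
    refine MeasurableSet.iInter fun j => measurableSet_le ?_ measurable_const
    exact (measurable_enorm_rankOneMeas D).comp
      (f := fun ab : (Fin n → Fin m1 → ℂ) × (Fin n → Fin m2 → ℂ) => (ab.1 j, ab.2 j))
      (by fun_prop)
  rw [← hp.measure_preimage hm.nullMeasurableSet]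
  have : (MeasurableEquiv.arrowProdEquivProdArrow (Fin m1 → ℂ) (Fin m2 → ℂ) (Fin n)) ⁻¹'
      {ab | ∀ j, ‖rankOneMeas (ab.1 j) (ab.2 j) D‖ₑ ≤ δ} =
      Set.univ.pi fun _ => {p | ‖rankOneMeas p.1 p.2 D‖ₑ ≤ δ} := by
    ext f
    simp [MeasurableEquiv.arrowProdEquivProdArrow, Equiv.arrowProdEquivProdArrow]
  rw [this, Measure.pi_pi]
  simp

lemma exists_norm_le_mul_entry {m1 m2 : ℕ} {D : EuclideanSpace ℂ (Fin m1 × Fin m2)} (hD : D ≠ 0) :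
    ∃ i j, ‖D‖ ≤ (m1 * m2 + 1) * ‖D (i, j)‖ := by
  by_contra! h
  have hpos : 0 < ‖D‖ := norm_pos_iff.2 hD
  have hK : (0 : ℝ) < m1 * m2 + 1 := by positivity
  have h1 : ∀ p ∈ Finset.univ, ‖D p‖ ^ 2 ≤ (‖D‖ / (m1 * m2 + 1)) ^ 2 := fun p _ => by
    gcongr
    rw [le_div_iff₀ hK, mul_comm]
    exact (h p.1 p.2).le
  have h2 := Finset.sum_le_sum h1
  rw [← EuclideanSpace.norm_sq_eq] at h2
  simp only [Finset.sum_const, Finset.card_univ, Fintype.card_prod, Fintype.card_fin,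
    nsmul_eq_mul, Nat.cast_mul, div_pow] at h2
  rw [← mul_div_assoc, le_div_iff₀ (by positivity)] at h2
  have : (0 : ℝ) ≤ m1 * m2 := by positivity
  nlinarith [mul_pos hpos hpos, mul_nonneg this (sq_nonneg ‖D‖),
    mul_nonneg (mul_nonneg this this) (sq_nonneg ‖D‖)]

lemma rankOneMeas_sub {m1 m2 : ℕ} (a : Fin m1 → ℂ) (b : Fin m2 → ℂ)
    (M N : EuclideanSpace ℂ (Fin m1 × Fin m2)) :
    rankOneMeas a b (M - N) = rankOneMeas a b M - rankOneMeas a b N := by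
  simp only [rankOneMeas, ← Finset.sum_sub_distrib, PiLp.sub_apply]
  exact Finset.sum_congr rfl fun i _ => Finset.sum_congr rfl fun j _ => by ring

lemma rankOneMeas_smul {m1 m2 : ℕ} (a : Fin m1 → ℂ) (b : Fin m2 → ℂ) (σ : ℂ)
    (M : EuclideanSpace ℂ (Fin m1 × Fin m2)) :
    rankOneMeas a b (σ • M) = σ * rankOneMeas a b M := by
  simp only [rankOneMeas, Finset.mul_sum, PiLp.smul_apply, smul_eq_mul]
  exact Finset.sum_congr rfl fun i _ => Finset.sum_congr rfl fun j _ => by ring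

lemma norm_rankOneMeas_le {m1 m2 : ℕ} {a : Fin m1 → ℂ} {b : Fin m2 → ℂ} {R : ℝ} (hR : 0 ≤ R)
    (ha : ∀ i, ‖a i‖ ≤ R) (hb : ∀ j, ‖b j‖ ≤ R) (D : EuclideanSpace ℂ (Fin m1 × Fin m2)) :
    ‖rankOneMeas a b D‖ ≤ m1 * m2 * R ^ 2 * ‖D‖ := by
  have h : ∀ i j, ‖(starRingEnd ℂ) (a i) * D (i, j) * (starRingEnd ℂ) (b j)‖ ≤ R * ‖D‖ * R := by
    intro i j
    rw [norm_mul, norm_mul, RCLike.norm_conj, RCLike.norm_conj]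
    gcongr
    · exact ha i
    · exact PiLp.norm_apply_le D (i, j)
    · exact hb j
  refine (norm_sum_le_of_le _ fun i _ => norm_sum_le_of_le _ fun j _ => h i j).trans (le_of_eq ?_)
  simp
  ring

/-! ### The union bound over a cover -/

lemma tupleMeasure_eq_restrict (R : ℝ) (m1 m2 n : ℕ) :
    tupleMeasure R m1 m2 n = volume.restrict
      ((Set.univ.pi fun _ => Set.univ.pi fun _ => Metric.closedBall 0 R) ×ˢ
        (Set.univ.pi fun _ => Set.univ.pi fun _ => Metric.closedBall 0 R)) := by
  simp only [tupleMeasure, polydiscMeasure, discMeasure]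
  rw [Measure.volume_eq_prod, ← Measure.prod_restrict, volume_pi, volume_pi,
    ← Measure.restrict_pi_pi, ← Measure.restrict_pi_pi]
  simp only [volume_pi, Measure.restrict_pi_pi]

lemma measurableSet_box (R : ℝ) (m1 m2 n : ℕ) : MeasurableSet
    ((Set.univ.pi fun _ : Fin n => Set.univ.pi fun _ : Fin m1 => Metric.closedBall (0 : ℂ) R) ×ˢ
      (Set.univ.pi fun _ : Fin n => Set.univ.pi fun _ : Fin m2 => Metric.closedBall (0 : ℂ) R)) :=
  (MeasurableSet.univ_pi fun _ => MeasurableSet.univ_pi fun _ => measurableSet_closedBall).prod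
    (MeasurableSet.univ_pi fun _ => MeasurableSet.univ_pi fun _ => measurableSet_closedBall)

lemma ae_tupleMeasure_bound (R : ℝ) (m1 m2 n : ℕ) : ∀ᵐ ab ∂tupleMeasure R m1 m2 n,
    (∀ j i, ‖ab.1 j i‖ ≤ R) ∧ ∀ j i, ‖ab.2 j i‖ ≤ R := by
  rw [tupleMeasure_eq_restrict]
  filter_upwards [ae_restrict_mem (measurableSet_box R m1 m2 n)] with ab hab
  simpa [Set.mem_prod, Set.mem_pi] using hab

/-- A Minkowski dimension below `d` bounds the covering number by `ρ⁻ᵈ`. -/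
lemma eventually_coveringNumber_le {E : Type*} [NormedAddCommGroup E] [NormedSpace ℝ E]
    [ProperSpace E] {T : Set E} (hT : T ⊆ Metric.closedBall 0 1) {d : ℝ}
    (hd : upperMinkowskiDim T < d) :
    ∀ᶠ ρ : ℝ in nhdsWithin 0 (Set.Ioi 0), (coveringNumber T ρ : ℝ) ≤ ρ ^ (-d) := by
  filter_upwards [eventually_lt_of_limsup_lt hd (isBoundedUnder_covering_ratio hT),
    Ioo_mem_nhdsGT (zero_lt_one (α := ℝ))] with ρ h ⟨hρ0, hρ1⟩
  rcases Nat.eq_zero_or_pos (coveringNumber T ρ) with h0 | h0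
  · rw [h0]; simp; positivity
  · have hl : 0 < Real.log (1 / ρ) := Real.log_pos (by rw [lt_div_iff₀ hρ0]; linarith)
    rw [div_lt_iff₀ hl] at h
    rw [Real.le_rpow_iff_log_le (by exact_mod_cast h0) hρ0]
    rw [one_div, Real.log_inv] at h
    linarith

/-- The union bound: pairs of points of `T` at distance at least `c` are replaced by pairs of centres
of a cover by balls of radius `ρ`. There are about `ρ ^ (-2 * d)` of them, each is bad on a set of
measure `O(ρ ^ (s * n))`, and `s < 2` can be chosen with `s * n > 2 * d`. -/
lemma tupleMeasure_separated_eq_zero {m1 m2 n : ℕ} (hn : 0 < n)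
    {T : Set (EuclideanSpace ℂ (Fin m1 × Fin m2))} (hT : T ⊆ Metric.closedBall 0 1)
    (hdim : upperMinkowskiDim T < n) {R : ℝ} (hR : 0 ≤ R) {c : ℝ} (hc : 0 < c) :
    tupleMeasure R m1 m2 n {ab | ∃ M1 ∈ T, ∃ M2 ∈ T, c ≤ ‖M1 - M2‖ ∧
      ∀ j, rankOneMeas (ab.1 j) (ab.2 j) M1 = rankOneMeas (ab.1 j) (ab.2 j) M2} = 0 := by
  classical
  set Bad := {ab : (Fin n → Fin m1 → ℂ) × (Fin n → Fin m2 → ℂ) | ∃ M1 ∈ T, ∃ M2 ∈ T,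
    c ≤ ‖M1 - M2‖ ∧ ∀ j, rankOneMeas (ab.1 j) (ab.2 j) M1 = rankOneMeas (ab.1 j) (ab.2 j) M2}
  have hn' : (0 : ℝ) < n := by exact_mod_cast hn
  obtain ⟨d, hd1, hd2⟩ := exists_between (max_lt hdim hn')
  have hd0 : 0 < d := (le_max_right _ _).trans_lt hd1
  obtain ⟨s, hs⟩ : ∃ s : ℝ, s = (d + n) / n := ⟨_, rfl⟩
  have hsn : s * n = d + n := by rw [hs]; field_simp
  have hs0 : 0 < s := by rw [hs]; positivity
  have hs2 : s < 2 := by rw [hs, div_lt_iff₀ hn']; linarith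
  obtain ⟨C, hC, hsmall⟩ := exists_measure_rankOne_small_le hs0 hs2 R m1 m2
  set L : ℝ := 2 * (m1 * m2 * R ^ 2) + 1 with hL
  have hL0 : 0 < L := by positivity
  set t : ℝ := c / 2 / (m1 * m2 + 1) with ht
  have hK : (0 : ℝ) < m1 * m2 + 1 := by positivity
  have ht0 : 0 < t := by positivity
  set C' : ℝ≥0∞ := C * ENNReal.ofReal (L ^ s * t ^ (-s)) with hC'
  have hC'top : C' ≠ ∞ := ENNReal.mul_ne_top hC ENNReal.ofReal_ne_top
  have hbound : ∀ᶠ ρ : ℝ in nhdsWithin 0 (Set.Ioi 0),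
      tupleMeasure R m1 m2 n Bad ≤ C' ^ n * ENNReal.ofReal (ρ ^ (n - d)) := by
    filter_upwards [eventually_coveringNumber_le hT ((le_max_left _ _).trans_lt hd1),
      Ioo_mem_nhdsGT (by positivity : 0 < c / 4)] with ρ hN ⟨hρ0, hρc⟩
    obtain ⟨S, hScard, hS⟩ := exists_cover_of_subset_unitBall hT hρ0
    set Q := (S ×ˢ S).filter fun q => c / 2 ≤ ‖q.1 - q.2‖ with hQ
    set δ : ℝ≥0∞ := ENNReal.ofReal (L * ρ) with hδ
    have hδ0 : δ ≠ 0 := (ENNReal.ofReal_pos.2 (by positivity)).ne'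
    have hcover : Bad ≤ᵐ[tupleMeasure R m1 m2 n] ⋃ q ∈ Q,
        {ab | ∀ j, ‖rankOneMeas (ab.1 j) (ab.2 j) (q.1 - q.2)‖ₑ ≤ δ} := by
      filter_upwards [ae_tupleMeasure_bound R m1 m2 n] with ab ⟨ha, hb⟩ hbad
      obtain ⟨M1, hM1, M2, hM2, hM, heq⟩ := hbad
      have h1 := hS hM1
      have h2 := hS hM2
      simp only [Set.mem_iUnion, exists_prop, mem_closedBall_iff_norm] at h1 h2
      obtain ⟨c1, hc1, h1⟩ := h1
      obtain ⟨c2, hc2, h2⟩ := h2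
      have hdist : ‖(M1 - c1) - (M2 - c2)‖ ≤ 2 * ρ := (norm_sub_le _ _).trans (by linarith)
      refine Set.mem_biUnion (x := (c1, c2)) ?_ ?_
      · simp only [hQ, Finset.coe_filter, Finset.mem_product, Set.mem_ofPred_eq]
        refine ⟨⟨hc1, hc2⟩, ?_⟩
        have : ‖M1 - M2‖ ≤ ‖c1 - c2‖ + ‖(M1 - c1) - (M2 - c2)‖ := by
          refine le_trans (le_of_eq ?_) (norm_add_le _ _)
          congr 1
          abel
        linarith
      · intro j
        have e : rankOneMeas (ab.1 j) (ab.2 j) (c1 - c2) =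
            -rankOneMeas (ab.1 j) (ab.2 j) ((M1 - c1) - (M2 - c2)) := by
          simp only [rankOneMeas_sub, heq j]
          ring
        change ‖rankOneMeas (ab.1 j) (ab.2 j) (c1 - c2)‖ₑ ≤ δ
        rw [e, enorm_neg, ← ofReal_norm]
        refine ENNReal.ofReal_le_ofReal ((norm_rankOneMeas_le hR (ha j) (hb j) _).trans ?_)
        have h0 : 0 ≤ (m1 : ℝ) * m2 * R ^ 2 := by positivity
        rw [hL]
        nlinarith [mul_le_mul_of_nonneg_left hdist h0]
    have hpair : ∀ q ∈ Q, tupleMeasure R m1 m2 n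
        {ab | ∀ j, ‖rankOneMeas (ab.1 j) (ab.2 j) (q.1 - q.2)‖ₑ ≤ δ}
          ≤ (C' * ENNReal.ofReal (ρ ^ s)) ^ n := by
      intro q hq
      have hq2 : c / 2 ≤ ‖q.1 - q.2‖ := (Finset.mem_filter.1 hq).2
      have hne : q.1 - q.2 ≠ 0 := norm_pos_iff.1 (by linarith)
      obtain ⟨i, j, hij⟩ := exists_norm_le_mul_entry hne
      rw [tupleMeasure_small]
      gcongr
      refine (hsmall (q.1 - q.2) i j δ hδ0 ENNReal.ofReal_ne_top).trans ?_
      have htD : t ≤ ‖(q.1 - q.2) (i, j)‖ := by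
        rw [ht, div_le_iff₀ hK, mul_comm]
        exact hq2.trans hij
      have h3 : ‖(q.1 - q.2) (i, j)‖ₑ ^ (-s) ≤ ENNReal.ofReal (t ^ (-s)) := by
        rw [← ofReal_norm, ENNReal.ofReal_rpow_of_pos (ht0.trans_le htD)]
        exact ENNReal.ofReal_le_ofReal (Real.rpow_le_rpow_of_nonpos ht0 htD (by linarith))
      calc C * (δ ^ s * ‖(q.1 - q.2) (i, j)‖ₑ ^ (-s))
          ≤ C * (ENNReal.ofReal ((L * ρ) ^ s) * ENNReal.ofReal (t ^ (-s))) := by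
            rw [hδ, ENNReal.ofReal_rpow_of_pos (by positivity)]
            gcongr
        _ = C' * ENNReal.ofReal (ρ ^ s) := by
            rw [hC', mul_assoc, ← ENNReal.ofReal_mul (by positivity),
              ← ENNReal.ofReal_mul (by positivity), Real.mul_rpow hL0.le hρ0.le]
            congr 2
            ring
    have hcard : (Q.card : ℝ≥0∞) ≤ ENNReal.ofReal (ρ ^ (-d) * ρ ^ (-d)) := by
      rw [← ENNReal.ofReal_natCast]
      refine ENNReal.ofReal_le_ofReal ?_
      have h4 : (Q.card : ℝ) ≤ S.card * S.card := by
        exact_mod_cast (Finset.card_filter_le _ _).trans (Finset.card_product S S).le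
      rw [hScard] at h4
      exact h4.trans (by gcongr)
    calc tupleMeasure R m1 m2 n Bad
        ≤ tupleMeasure R m1 m2 n (⋃ q ∈ Q,
          {ab | ∀ j, ‖rankOneMeas (ab.1 j) (ab.2 j) (q.1 - q.2)‖ₑ ≤ δ}) := measure_mono_ae hcover
      _ ≤ ∑ q ∈ Q, tupleMeasure R m1 m2 n
          {ab | ∀ j, ‖rankOneMeas (ab.1 j) (ab.2 j) (q.1 - q.2)‖ₑ ≤ δ} :=
          measure_biUnion_finset_le _ _
      _ ≤ Q.card * (C' * ENNReal.ofReal (ρ ^ s)) ^ n := by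
          rw [← nsmul_eq_mul]
          exact Finset.sum_le_card_nsmul _ _ _ hpair
      _ ≤ ENNReal.ofReal (ρ ^ (-d) * ρ ^ (-d)) * (C' * ENNReal.ofReal (ρ ^ s)) ^ n := by gcongr
      _ = C' ^ n * ENNReal.ofReal (ρ ^ (n - d)) := by
          rw [mul_pow, mul_left_comm, ← ENNReal.ofReal_pow (by positivity),
            ← ENNReal.ofReal_mul (by positivity), ← Real.rpow_mul_natCast hρ0.le,
            ← Real.rpow_add hρ0, ← Real.rpow_add hρ0]
          congr 3
          linarith
  have hlim : Tendsto (fun ρ : ℝ => C' ^ n * ENNReal.ofReal (ρ ^ (n - d)))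
      (nhdsWithin 0 (Set.Ioi 0)) (nhds 0) := by
    have h1 : Tendsto (fun ρ : ℝ => ρ ^ (n - d)) (nhdsWithin 0 (Set.Ioi 0)) (nhds 0) := by
      have := (Real.continuousAt_rpow_const 0 (n - d) (Or.inr (by linarith))).tendsto
      rw [Real.zero_rpow (by linarith)] at this
      exact this.mono_left nhdsWithin_le_nhds
    have h2 := ENNReal.Tendsto.const_mul (ENNReal.tendsto_ofReal h1) (a := C' ^ n)
      (Or.inr (ENNReal.pow_ne_top hC'top))
    simpa using h2
  exact le_antisymm (ge_of_tendsto hlim hbound) zero_le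

/-- Strong identifiability of cone-constrained matrix recovery from rank-one measurements:
if `Ω` is a nonempty cone and `n` exceeds the upper Minkowski dimension of
`Ω_B = Ω ∩ {‖M‖_F ≤ 1}`, then for Lebesgue-almost all tuples `(a_j, b_j)`, any two matrices
in `Ω` with the same measurements coincide. -/
theorem strong_identifiability_cone (m1 m2 n : ℕ) (hn : 0 < n)
    (Ω : Set (EuclideanSpace ℂ (Fin m1 × Fin m2))) (hne : Ω.Nonempty)
    (hcone : ∀ M ∈ Ω, ∀ σ : ℝ, 0 < σ → (σ : ℂ) • M ∈ Ω)
    (hdim : upperMinkowskiDim (Ω ∩ Metric.closedBall 0 1) < n) :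
    ∀ᵐ ab : (Fin n → Fin m1 → ℂ) × (Fin n → Fin m2 → ℂ),
      ∀ M1 ∈ Ω, ∀ M2 ∈ Ω, (∀ j : Fin n, rankOneMeas (ab.1 j) (ab.2 j) M1 =
          rankOneMeas (ab.1 j) (ab.2 j) M2) → M1 = M2 := by
  have key : ∀ R k : ℕ, ∀ᵐ ab : (Fin n → Fin m1 → ℂ) × (Fin n → Fin m2 → ℂ),
      ((∀ j i, ‖ab.1 j i‖ ≤ R) ∧ ∀ j i, ‖ab.2 j i‖ ≤ R) →
      ¬ ∃ M1 ∈ Ω ∩ Metric.closedBall 0 1, ∃ M2 ∈ Ω ∩ Metric.closedBall 0 1,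
        1 / ((k : ℝ) + 1) ≤ ‖M1 - M2‖ ∧
        ∀ j, rankOneMeas (ab.1 j) (ab.2 j) M1 = rankOneMeas (ab.1 j) (ab.2 j) M2 := by
    intro R k
    have h := tupleMeasure_separated_eq_zero hn (Set.inter_subset_right) hdim
      (Nat.cast_nonneg R) (by positivity : 0 < 1 / ((k : ℝ) + 1))
    rw [← compl_compl {ab | _}, ← mem_ae_iff, tupleMeasure_eq_restrict] at h
    have h' := (ae_restrict_iff' (measurableSet_box R m1 m2 n)).1 h
    filter_upwards [h'] with ab hab hR
    exact hab (by simpa [Set.mem_prod, Set.mem_pi] using hR)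
  filter_upwards [ae_all_iff.2 fun R => ae_all_iff.2 (key R)] with ab hab M1 hM1 M2 hM2 heq
  by_contra hM
  obtain ⟨R, hR⟩ := exists_nat_ge (∑ j, (∑ i, ‖ab.1 j i‖ + ∑ i, ‖ab.2 j i‖))
  -- Rescale both matrices into the unit ball by a common factor.
  obtain ⟨σ, hσ⟩ : ∃ σ : ℝ, σ = (‖M1‖ + ‖M2‖ + 1)⁻¹ := ⟨_, rfl⟩
  have hσ0 : 0 < σ := by rw [hσ]; positivity
  have hnorm : ∀ M : EuclideanSpace ℂ (Fin m1 × Fin m2), ‖M‖ ≤ ‖M1‖ + ‖M2‖ + 1 →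
      (σ : ℂ) • M ∈ Metric.closedBall 0 1 := fun M hM => by
    rw [mem_closedBall_zero_iff, norm_smul, Complex.norm_real, Real.norm_of_nonneg hσ0.le, hσ,
      inv_mul_le_iff₀ (by positivity)]
    linarith
  have hsub : 0 < ‖(σ : ℂ) • M1 - (σ : ℂ) • M2‖ := by
    rw [← smul_sub, norm_pos_iff]
    exact smul_ne_zero (by exact_mod_cast hσ0.ne') (sub_ne_zero.2 hM)
  obtain ⟨k, hk⟩ := exists_nat_one_div_lt hsub
  refine hab R k ⟨fun j i => ?_, fun j i => ?_⟩
    ⟨_, ⟨hcone M1 hM1 σ hσ0, hnorm _ (by linarith [norm_nonneg M2])⟩,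
      _, ⟨hcone M2 hM2 σ hσ0, hnorm _ (by linarith [norm_nonneg M1])⟩, hk.le, fun j => by
        rw [rankOneMeas_smul, rankOneMeas_smul, heq j]⟩
  all_goals
    refine le_trans ?_ hR
    refine le_trans ?_ (Finset.single_le_sum (fun j _ => by positivity) (Finset.mem_univ j))
  · exact (Finset.single_le_sum (f := fun i => ‖ab.1 j i‖) (fun i _ => norm_nonneg _)
      (Finset.mem_univ i)).trans (le_add_of_nonneg_right (by positivity))
  · exact (Finset.single_le_sum (f := fun i => ‖ab.2 j i‖) (fun i _ => norm_nonneg _)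
      (Finset.mem_univ i)).trans (le_add_of_nonneg_left (by positivity))
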